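/- Let p, θ > 0 and let (u,v) be a smooth positive solution of the Grushin Lane–Emden system on ℝ^N. Then for every integer k ≥ 1 and every ζ ∈ C_c^∞(ℝ^N) with 0 ≤ ζ ≤ 1: ∫_{ℝ^N} v^{p+1} ζ^{4k} dxdy − ∫_{ℝ^N} u^{θ+1} ζ^{4k} dxdy ≤ ∫_{ℝ^N} u v |Δ_s(ζ^{4k})| dxdy + 2 ∫_{ℝ^N} v |∇_s u| |∇_s(ζ^{4k})| dxdy. -/

import Mathlib

open MeasureTheory Real

noncomputable section

/-- Euclidean norm on `Fin n → ℝ`. -/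
def enorm' {n : ℕ} (x : Fin n → ℝ) : ℝ := Real.sqrt (∑ i, (x i) ^ 2)

/-- Points of `ℝ^N = ℝ^{N₁} × ℝ^{N₂}`. -/
abbrev Pt (N₁ N₂ : ℕ) := (Fin N₁ → ℝ) × (Fin N₂ → ℝ)

variable {N₁ N₂ : ℕ}

/-- Partial derivative in the variable `x i`. -/
def pX (i : Fin N₁) (w : Pt N₁ N₂ → ℝ) (z : Pt N₁ N₂) : ℝ :=
  deriv (fun t => w (Function.update z.1 i t, z.2)) (z.1 i)

/-- Partial derivative in the variable `y j`. -/
def pY (j : Fin N₂) (w : Pt N₁ N₂ → ℝ) (z : Pt N₁ N₂) : ℝ :=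
  deriv (fun t => w (z.1, Function.update z.2 j t)) (z.2 j)

/-- Laplacian in the `x`-variables. -/
def lapX (w : Pt N₁ N₂ → ℝ) (z : Pt N₁ N₂) : ℝ := ∑ i, pX i (pX i w) z

/-- Laplacian in the `y`-variables. -/
def lapY (w : Pt N₁ N₂ → ℝ) (z : Pt N₁ N₂) : ℝ := ∑ j, pY j (pY j w) z

/-- The Grushin operator `Δ_s w = Δ_x w + |x|^{2s} Δ_y w`. -/
def grushinLap (s : ℝ) (w : Pt N₁ N₂ → ℝ) (z : Pt N₁ N₂) : ℝ :=
  lapX w z + (enorm' z.1) ^ (2 * s) * lapY w z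

/-- Norm of the Grushin gradient: `|∇_s w| = (|∇_x w|² + |x|^{2s}|∇_y w|²)^{1/2}`. -/
def grushinGrad (s : ℝ) (w : Pt N₁ N₂ → ℝ) (z : Pt N₁ N₂) : ℝ :=
  Real.sqrt ((∑ i, (pX i w z) ^ 2) + (enorm' z.1) ^ (2 * s) * ∑ j, (pY j w z) ^ 2)

/-- Hilbert–Schmidt norm of the Grushin Hessian `∇_s² w`. -/
def grushinHess (s : ℝ) (w : Pt N₁ N₂ → ℝ) (z : Pt N₁ N₂) : ℝ :=
  Real.sqrt ((∑ i, ∑ j, (pX i (pX j w) z) ^ 2)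
    + 2 * (enorm' z.1) ^ (2 * s) * (∑ i, ∑ k, (pX i (pY k w) z) ^ 2)
    + (enorm' z.1) ^ (4 * s) * ∑ h, ∑ k, (pY h (pY k w) z) ^ 2)

/-- Norm of the gradient in the `x`-variables only. -/
def gradXNorm (w : Pt N₁ N₂ → ℝ) (z : Pt N₁ N₂) : ℝ := Real.sqrt (∑ i, (pX i w z) ^ 2)

/-- Norm of the gradient in the `y`-variables only. -/
def gradYNorm (w : Pt N₁ N₂ → ℝ) (z : Pt N₁ N₂) : ℝ := Real.sqrt (∑ j, (pY j w z) ^ 2)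

/-- HS norm of the Hessian in the `x`-variables only. -/
def hessXNorm (w : Pt N₁ N₂ → ℝ) (z : Pt N₁ N₂) : ℝ :=
  Real.sqrt (∑ i, ∑ j, (pX i (pX j w) z) ^ 2)

/-- HS norm of the Hessian in the `y`-variables only. -/
def hessYNorm (w : Pt N₁ N₂ → ℝ) (z : Pt N₁ N₂) : ℝ :=
  Real.sqrt (∑ h, ∑ k, (pY h (pY k w) z) ^ 2)

/-- `(u,v)` is a smooth positive solution of the Grushin Lane–Emden system
`-Δ_s u = v^p`, `-Δ_s v = u^θ`, `u, v > 0` on `ℝ^N`. -/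
def IsLaneEmdenSol (s p θ : ℝ) (u v : Pt N₁ N₂ → ℝ) : Prop :=
  ContDiff ℝ (⊤ : ℕ∞) u ∧ ContDiff ℝ (⊤ : ℕ∞) v ∧ (∀ z, 0 < u z) ∧ (∀ z, 0 < v z) ∧
  (∀ z, -grushinLap s u z = (v z) ^ p) ∧ (∀ z, -grushinLap s v z = (u z) ^ θ)

/-- Stability of a solution `(u,v)`: there are `η ≥ 0` and smooth positive `ξ, ζ` with
`-Δ_s ξ = p v^{p-1} ζ + η ξ` and `-Δ_s ζ = θ u^{θ-1} ξ + η ζ`. -/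
def IsStable (s p θ : ℝ) (u v : Pt N₁ N₂ → ℝ) : Prop :=
  ∃ (η : ℝ) (ξ ζ : Pt N₁ N₂ → ℝ), 0 ≤ η ∧
    ContDiff ℝ (⊤ : ℕ∞) ξ ∧ ContDiff ℝ (⊤ : ℕ∞) ζ ∧ (∀ z, 0 < ξ z) ∧ (∀ z, 0 < ζ z) ∧
    (∀ z, -grushinLap s ξ z = p * (v z) ^ (p - 1) * ζ z + η * ξ z) ∧
    (∀ z, -grushinLap s ζ z = θ * (u z) ^ (θ - 1) * ξ z + η * ζ z)

lemma aux_pX (i : Fin N₁) (w : Pt N₁ N₂ → ℝ) (hw : Differentiable ℝ w) :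
    pX i w = fun z => fderiv ℝ w z (Pi.single i 1, 0) := by
  funext z
  unfold pX
  have h1 : HasDerivAt (fun t : ℝ => ((Function.update z.1 i t, z.2) : Pt N₁ N₂))
      (Pi.single i 1, 0) (z.1 i) :=
    (hasDerivAt_update z.1 i (z.1 i)).prodMk (hasDerivAt_const _ _)
  have h2 : HasFDerivAt w (fderiv ℝ w z) (Function.update z.1 i (z.1 i), z.2) := by
    rw [Function.update_eq_self]; exact (hw z).hasFDerivAt
  exact (h2.comp_hasDerivAt (z.1 i) h1).deriv

lemma aux_pY (j : Fin N₂) (w : Pt N₁ N₂ → ℝ) (hw : Differentiable ℝ w) :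
    pY j w = fun z => fderiv ℝ w z (0, Pi.single j 1) := by
  funext z
  unfold pY
  have h1 : HasDerivAt (fun t : ℝ => ((z.1, Function.update z.2 j t) : Pt N₁ N₂))
      (0, Pi.single j 1) (z.2 j) :=
    (hasDerivAt_const _ _).prodMk (hasDerivAt_update z.2 j (z.2 j))
  have h2 : HasFDerivAt w (fderiv ℝ w z) (z.1, Function.update z.2 j (z.2 j)) := by
    rw [Function.update_eq_self]; exact (hw z).hasFDerivAt
  exact (h2.comp_hasDerivAt (z.2 j) h1).deriv

/-- directional derivative -/
def dD (e : Pt N₁ N₂) (w : Pt N₁ N₂ → ℝ) (z : Pt N₁ N₂) : ℝ := fderiv ℝ w z e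

lemma dD_smooth (e : Pt N₁ N₂) {w : Pt N₁ N₂ → ℝ} (hw : ContDiff ℝ (⊤ : ℕ∞) w) :
    ContDiff ℝ (⊤ : ℕ∞) (dD e w) := by
  have : ContDiff ℝ (⊤ : ℕ∞) (fderiv ℝ w) := hw.fderiv_right (by simp)
  exact this.clm_apply contDiff_const

lemma sm_diff {w : Pt N₁ N₂ → ℝ} (hw : ContDiff ℝ (⊤ : ℕ∞) w) : Differentiable ℝ w :=
  hw.differentiable (by simp)

lemma dD_supp (e : Pt N₁ N₂) {w : Pt N₁ N₂ → ℝ} (hw : HasCompactSupport w) :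
    HasCompactSupport (dD e w) := hw.fderiv_apply (𝕜 := ℝ) e

lemma dD_mul (e : Pt N₁ N₂) {f g : Pt N₁ N₂ → ℝ} (hf : ContDiff ℝ (⊤ : ℕ∞) f)
    (hg : ContDiff ℝ (⊤ : ℕ∞) g) :
    dD e (fun z => f z * g z) = fun z => f z * dD e g z + g z * dD e f z := by
  funext z
  unfold dD
  rw [fderiv_fun_mul (sm_diff hf z) (sm_diff hg z)]
  simp

lemma dD_mul2 (e : Pt N₁ N₂) {f g : Pt N₁ N₂ → ℝ} (hf : ContDiff ℝ (⊤ : ℕ∞) f)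
    (hg : ContDiff ℝ (⊤ : ℕ∞) g) (z : Pt N₁ N₂) :
    dD e (dD e (fun z => f z * g z)) z =
      f z * dD e (dD e g) z + 2 * (dD e f z * dD e g z) + g z * dD e (dD e f) z := by
  have h1 := hf.mul (dD_smooth e hg)
  have h2 := hg.mul (dD_smooth e hf)
  have : dD e (fun z => f z * dD e g z + g z * dD e f z) z =
    dD e (fun z => f z * dD e g z) z + dD e (fun z => g z * dD e f z) z := by
    have h3 := fderiv_fun_add (sm_diff h1 z) (sm_diff h2 z)
    exact congrArg (fun L : Pt N₁ N₂ →L[ℝ] ℝ => L e) h3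
  rw [dD_mul e hf hg, this, dD_mul e hf (dD_smooth e hg), dD_mul e hg (dD_smooth e hf)]
  ring

lemma line_dD (e : Pt N₁ N₂) {c f : Pt N₁ N₂ → ℝ} (hce : ∀ z (t : ℝ), c (z + t • e) = c z)
    (hf : ContDiff ℝ (⊤ : ℕ∞) f) (z : Pt N₁ N₂) :
    HasLineDerivAt ℝ (fun z => c z * f z) (c z * dD e f z) z e := by
  have h : HasLineDerivAt ℝ f (dD e f z) z e := (sm_diff hf z).hasFDerivAt.hasLineDerivAt e
  unfold HasLineDerivAt at *
  simp only [hce]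
  exact h.const_mul (c z)

lemma cs_int {f : Pt N₁ N₂ → ℝ} (hf : Continuous f) (hs : HasCompactSupport f) :
    Integrable f := hf.integrable_of_hasCompactSupport hs

lemma ibp1 (e : Pt N₁ N₂) {c f g : Pt N₁ N₂ → ℝ} (hc : Continuous c)
    (hce : ∀ z (t : ℝ), c (z + t • e) = c z)
    (hf : ContDiff ℝ (⊤ : ℕ∞) f) (hg : ContDiff ℝ (⊤ : ℕ∞) g)
    (hs : HasCompactSupport f ∨ HasCompactSupport g) :
    ∫ z, c z * f z * dD e g z = - ∫ z, c z * dD e f z * g z := by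
  have cf := hf.continuous
  have cg := hg.continuous
  have cdf := (dD_smooth e hf).continuous
  have cdg := (dD_smooth e hg).continuous
  have key : ∀ a b : Pt N₁ N₂ → ℝ, Continuous a → Continuous b →
      (HasCompactSupport a ∨ HasCompactSupport b) → Integrable (fun z => c z * a z * b z) := by
    intro a b ha hb h
    refine cs_int (by fun_prop) ?_
    rcases h with h | h
    · exact (h.mul_left (f := c)).mul_right
    · exact h.mul_left
  haveI : (volume : Measure (Pt N₁ N₂)).IsAddHaarMeasure :=
    Measure.prod.instIsAddHaarMeasure (volume : Measure (Fin N₁ → ℝ)) (volume : Measure (Fin N₂ → ℝ))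
  have := integral_bilinear_hasLineDerivAt_right_eq_neg_left_of_integrable (μ := volume)
    (f := fun z => c z * f z) (f' := fun z => c z * dD e f z) (g := g) (g' := dD e g) (v := e)
    (B := ContinuousLinearMap.mul ℝ ℝ)
    (by simpa using key _ _ cdf cg (hs.imp (dD_supp e) id))
    (by simpa using key _ _ cf cdg (hs.imp id (dD_supp e)))
    (by simpa using key _ _ cf cg hs)
    (fun z _ => line_dD e hce hf z)
    (fun z _ => (sm_diff hg z).hasFDerivAt.hasLineDerivAt e)
  simpa using this

lemma ibp2 (e : Pt N₁ N₂) {c f g : Pt N₁ N₂ → ℝ} (hc : Continuous c)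
    (hce : ∀ z (t : ℝ), c (z + t • e) = c z)
    (hf : ContDiff ℝ (⊤ : ℕ∞) f) (hg : ContDiff ℝ (⊤ : ℕ∞) g)
    (hs : HasCompactSupport f) :
    Integrable (fun z => c z * (f z * dD e (dD e g) z - g z * dD e (dD e f) z)) ∧
    ∫ z, c z * (f z * dD e (dD e g) z - g z * dD e (dD e f) z) = 0 := by
  have cf := hf.continuous
  have cg := hg.continuous
  have cdf := (dD_smooth e (dD_smooth e hf)).continuous
  have cdg := (dD_smooth e (dD_smooth e hg)).continuous
  have i1 : Integrable (fun z => c z * f z * dD e (dD e g) z) :=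
    cs_int (by fun_prop) (hs.mul_left (f := c)).mul_right
  have i2 : Integrable (fun z => c z * g z * dD e (dD e f) z) :=
    cs_int (by fun_prop) ((dD_supp e (dD_supp e hs)).mul_left)
  have e1 := ibp1 e hc hce hf (dD_smooth e hg) (Or.inl hs)
  have e2 := ibp1 e hc hce hg (dD_smooth e hf) (Or.inr (dD_supp e hs))
  have e0 : (fun z => c z * (f z * dD e (dD e g) z - g z * dD e (dD e f) z)) =
    fun z => c z * f z * dD e (dD e g) z - c z * g z * dD e (dD e f) z := by
    funext z; ring
  rw [e0]
  refine ⟨i1.sub i2, ?_⟩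
  rw [integral_sub i1 i2, e1, e2]
  have : ∀ z, c z * dD e f z * dD e g z = c z * dD e g z * dD e f z := fun z => by ring
  simp [this]

/-- coordinate vectors -/
def eX (i : Fin N₁) : Pt N₁ N₂ := (Pi.single i 1, 0)
/-- coordinate vectors -/
def eY (j : Fin N₂) : Pt N₁ N₂ := (0, Pi.single j 1)

lemma pX_eq (i : Fin N₁) {w : Pt N₁ N₂ → ℝ} (hw : ContDiff ℝ (⊤ : ℕ∞) w) :
    pX i w = dD (eX i) w := aux_pX i w (sm_diff hw)

lemma pY_eq (i : Fin N₂) {w : Pt N₁ N₂ → ℝ} (hw : ContDiff ℝ (⊤ : ℕ∞) w) :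
    pY i w = dD (eY i) w := aux_pY i w (sm_diff hw)

lemma lap_eq (s : ℝ) {w : Pt N₁ N₂ → ℝ} (hw : ContDiff ℝ (⊤ : ℕ∞) w) (z : Pt N₁ N₂) :
    grushinLap s w z = ∑ i, dD (eX i) (dD (eX i) w) z +
      enorm' z.1 ^ (2 * s) * ∑ j, dD (eY j) (dD (eY j) w) z := by
  unfold grushinLap lapX lapY
  congr 1
  · exact Finset.sum_congr rfl fun i _ => by rw [pX_eq i hw, pX_eq i (dD_smooth _ hw)]
  · congr 1
    exact Finset.sum_congr rfl fun i _ => by rw [pY_eq i hw, pY_eq i (dD_smooth _ hw)]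

lemma grad_eq (s : ℝ) {w : Pt N₁ N₂ → ℝ} (hw : ContDiff ℝ (⊤ : ℕ∞) w) (z : Pt N₁ N₂) :
    grushinGrad s w z = Real.sqrt (∑ i, (dD (eX i) w z) ^ 2 +
      enorm' z.1 ^ (2 * s) * ∑ j, (dD (eY j) w z) ^ 2) := by
  unfold grushinGrad
  simp only [pX_eq _ hw, pY_eq _ hw]

lemma wt_cont {s : ℝ} (hs : 0 ≤ s) :
    Continuous (fun z : Pt N₁ N₂ => enorm' z.1 ^ (2 * s)) := by
  have : Continuous (fun z : Pt N₁ N₂ => enorm' z.1) := by unfold enorm'; fun_prop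
  exact this.rpow_const fun z => Or.inr (by positivity)

lemma wt_nonneg (s : ℝ) (z : Pt N₁ N₂) : 0 ≤ enorm' z.1 ^ (2 * s) :=
  Real.rpow_nonneg (Real.sqrt_nonneg _) _

lemma lap_cont {s : ℝ} (hs : 0 ≤ s) {w : Pt N₁ N₂ → ℝ} (hw : ContDiff ℝ (⊤ : ℕ∞) w) :
    Continuous (grushinLap s w) := by
  have h := wt_cont (N₁ := N₁) (N₂ := N₂) hs
  have h2 : ∀ e, Continuous (dD e (dD e w)) := fun e =>
    (dD_smooth e (dD_smooth e hw)).continuous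
  rw [funext (lap_eq s hw)]
  exact (continuous_finsetSum _ fun i _ => h2 _).add
    (h.mul (continuous_finsetSum _ fun i _ => h2 _))

lemma grad_cont {s : ℝ} (hs : 0 ≤ s) {w : Pt N₁ N₂ → ℝ} (hw : ContDiff ℝ (⊤ : ℕ∞) w) :
    Continuous (grushinGrad s w) := by
  have h := wt_cont (N₁ := N₁) (N₂ := N₂) hs
  have h2 : ∀ e, Continuous (dD e w) := fun e => (dD_smooth e hw).continuous
  rw [funext (grad_eq s hw)]
  exact ((continuous_finsetSum _ fun i _ => (h2 _).pow 2).add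
    (h.mul (continuous_finsetSum _ fun i _ => (h2 _).pow 2))).sqrt

lemma dD_zero_off (e : Pt N₁ N₂) {w : Pt N₁ N₂ → ℝ} {z : Pt N₁ N₂} (hz : z ∉ tsupport w) :
    dD e w z = 0 := by
  by_contra h
  exact hz (tsupport_fderiv_apply_subset ℝ e (subset_tsupport _ h))

lemma dD2_zero_off (e : Pt N₁ N₂) {w : Pt N₁ N₂ → ℝ} {z : Pt N₁ N₂} (hz : z ∉ tsupport w) :
    dD e (dD e w) z = 0 :=
  dD_zero_off e fun h => hz (tsupport_fderiv_apply_subset ℝ e h)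

lemma lap_supp (s : ℝ) {w : Pt N₁ N₂ → ℝ} (hw : ContDiff ℝ (⊤ : ℕ∞) w)
    (hc : HasCompactSupport w) : HasCompactSupport (grushinLap s w) :=
  HasCompactSupport.intro hc fun z hz => by
    rw [lap_eq s hw]; simp [dD2_zero_off _ hz]

lemma grad_supp (s : ℝ) {w : Pt N₁ N₂ → ℝ} (hw : ContDiff ℝ (⊤ : ℕ∞) w)
    (hc : HasCompactSupport w) : HasCompactSupport (grushinGrad s w) :=
  HasCompactSupport.intro hc fun z hz => by
    rw [grad_eq s hw]; simp [dD_zero_off _ hz]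

/-- the Grushin inner product of gradients -/
def gip (s : ℝ) (f g : Pt N₁ N₂ → ℝ) (z : Pt N₁ N₂) : ℝ :=
  ∑ i, dD (eX i) f z * dD (eX i) g z +
      enorm' z.1 ^ (2 * s) * ∑ j, dD (eY j) f z * dD (eY j) g z

lemma lap_mul (s : ℝ) {f g : Pt N₁ N₂ → ℝ} (hf : ContDiff ℝ (⊤ : ℕ∞) f)
    (hg : ContDiff ℝ (⊤ : ℕ∞) g) (z : Pt N₁ N₂) :
    grushinLap s (fun z => f z * g z) z =
      f z * grushinLap s g z + 2 * gip s f g z + g z * grushinLap s f z := by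
  rw [lap_eq s (hf.mul hg), lap_eq s hf, lap_eq s hg]
  unfold gip
  simp only [dD_mul2 _ hf hg, Finset.sum_add_distrib, ← Finset.mul_sum]
  ring

lemma gip_le (s : ℝ) {f g : Pt N₁ N₂ → ℝ} (hf : ContDiff ℝ (⊤ : ℕ∞) f)
    (hg : ContDiff ℝ (⊤ : ℕ∞) g) (z : Pt N₁ N₂) :
    gip s f g z ≤ grushinGrad s f z * grushinGrad s g z := by
  rw [grad_eq s hf, grad_eq s hg]
  have hw := wt_nonneg s z
  unfold gip
  set c := enorm' z.1 ^ (2 * s)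
  let F : (w : Pt N₁ N₂ → ℝ) → Fin N₁ ⊕ Fin N₂ → ℝ := fun w =>
    Sum.elim (fun i => dD (eX i) w z) (fun j => √c * dD (eY j) w z)
  have h := Real.sum_mul_le_sqrt_mul_sqrt Finset.univ (F f) (F g)
  have hc : √c * √c = c := Real.mul_self_sqrt hw
  have h1 : ∀ a b : ℝ, √c * a * (√c * b) = c * (a * b) := fun a b => by
    rw [← hc]; simp only [hc]; linear_combination (a * b) * hc
  have h2 : ∀ a : ℝ, (√c * a) ^ 2 = c * a ^ 2 := fun a => by
    linear_combination a ^ 2 * hc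
  simpa [F, h1, h2, ← Finset.mul_sum] using h

lemma green (s : ℝ) (hs : 0 ≤ s) {f g : Pt N₁ N₂ → ℝ} (hf : ContDiff ℝ (⊤ : ℕ∞) f)
    (hg : ContDiff ℝ (⊤ : ℕ∞) g) (hc : HasCompactSupport f) :
    ∫ z, (f z * grushinLap s g z - g z * grushinLap s f z) = 0 := by
  have hX : ∀ i : Fin N₁, _ := fun i => ibp2 (N₂ := N₂) (eX i) (c := fun _ => 1)
    continuous_const (fun _ _ => rfl) hf hg hc
  have hY : ∀ j : Fin N₂, _ := fun j => ibp2 (N₁ := N₁) (eY j)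
    (c := fun z => enorm' z.1 ^ (2 * s)) (wt_cont hs) (fun z t => by simp [eY]) hf hg hc
  have e0 : (fun z => f z * grushinLap s g z - g z * grushinLap s f z) = fun z =>
      ∑ i, 1 * (f z * dD (eX i) (dD (eX i) g) z - g z * dD (eX i) (dD (eX i) f) z) +
      ∑ j, enorm' z.1 ^ (2 * s) *
        (f z * dD (eY j) (dD (eY j) g) z - g z * dD (eY j) (dD (eY j) f) z) := by
    funext z
    rw [lap_eq s hf, lap_eq s hg]
    simp only [← Finset.mul_sum, Finset.sum_sub_distrib]
    ring
  rw [e0, integral_add (integrable_finsetSum _ fun i _ => (hX i).1)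
    (integrable_finsetSum _ fun i _ => (hY i).1),
    integral_finsetSum _ fun i _ => (hX i).1, integral_finsetSum _ fun i _ => (hY i).1]
  simp only [(hX _).2, (hY _).2]
  simp

/-- multiplying `-Δ_s v = u^θ` by `u ζ^{4k}` and integrating by parts gives
`∫ v^{p+1} ζ^{4k} - ∫ u^{θ+1} ζ^{4k}
  ≤ ∫ u v |Δ_s(ζ^{4k})| + 2 ∫ v |∇_s u| |∇_s(ζ^{4k})|`. -/
theorem parts_estimate (N₁ N₂ : ℕ) (hN₁ : 1 ≤ N₁) (hN₂ : 1 ≤ N₂)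
    (s p θ : ℝ) (hs : 0 ≤ s) (hp : 0 < p) (hθ : 0 < θ)
    (u v : Pt N₁ N₂ → ℝ) (hsol : IsLaneEmdenSol s p θ u v)
    (k : ℕ) (hk : 1 ≤ k)
    (ζ : Pt N₁ N₂ → ℝ) (hζ : ContDiff ℝ (⊤ : ℕ∞) ζ) (hζc : HasCompactSupport ζ)
    (hζ0 : ∀ z, 0 ≤ ζ z) (hζ1 : ∀ z, ζ z ≤ 1) :
    (∫ z, (v z) ^ (p + 1) * ζ z ^ (4 * k)) - (∫ z, (u z) ^ (θ + 1) * ζ z ^ (4 * k)) ≤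
      (∫ z, u z * v z * |grushinLap s (fun w => ζ w ^ (4 * k)) z|)
      + 2 * ∫ z, v z * grushinGrad s u z * grushinGrad s (fun w => ζ w ^ (4 * k)) z := by
  obtain ⟨hu, hv, hu0, hv0, eu, ev⟩ := hsol
  set φ : Pt N₁ N₂ → ℝ := fun w => ζ w ^ (4 * k) with hφd
  have hφ : ContDiff ℝ (⊤ : ℕ∞) φ := hζ.pow _
  have hφc : HasCompactSupport φ := HasCompactSupport.intro hζc fun z hz => by
    simp only [hφd, image_eq_zero_of_notMem_tsupport hz]
    exact zero_pow (by omega)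
  have hφz : ∀ z, ζ z ^ (4 * k) = φ z := fun _ => rfl
  simp only [hφz]
  have cu := hu.continuous
  have cv := hv.continuous
  have cφ := hφ.continuous
  have hf : ContDiff ℝ (⊤ : ℕ∞) (fun z => u z * φ z) := hu.mul hφ
  have hfc : HasCompactSupport (fun z => u z * φ z) := hφc.mul_left
  have cvp : Continuous fun z => v z ^ (p + 1) :=
    cv.rpow_const fun z => Or.inl (hv0 z).ne'
  have cup : Continuous fun z => u z ^ (θ + 1) :=
    cu.rpow_const fun z => Or.inl (hu0 z).ne'
  have i1 : Integrable fun z => v z ^ (p + 1) * φ z := cs_int (by fun_prop) hφc.mul_left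
  have i2 : Integrable fun z => u z ^ (θ + 1) * φ z := cs_int (by fun_prop) hφc.mul_left
  have cl := lap_cont hs hφ
  have clf := lap_cont hs hf
  have clv := lap_cont hs hv
  have cgu := grad_cont hs hu
  have cgφ := grad_cont hs hφ
  have i3 : Integrable fun z => u z * v z * |grushinLap s φ z| :=
    cs_int (by fun_prop) ((lap_supp s hφ hφc).abs.mul_left)
  have i4 : Integrable fun z => v z * grushinGrad s u z * grushinGrad s φ z :=
    cs_int (by fun_prop) ((grad_supp s hφ hφc).mul_left)
  have i5 : Integrable fun z => u z * φ z * grushinLap s v z -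
      v z * grushinLap s (fun z => u z * φ z) z :=
    (cs_int (by fun_prop) hfc.mul_right).sub
      (cs_int (by fun_prop) (lap_supp s hf hfc).mul_left)
  have hg := green s hs hf hv hfc
  rw [← integral_sub i1 i2, ← integral_const_mul, ← integral_add i3 (i4.const_mul 2)]
  have hR : ∫ z, (u z * v z * |grushinLap s φ z| +
      2 * (v z * grushinGrad s u z * grushinGrad s φ z)) =
      ∫ z, ((u z * v z * |grushinLap s φ z| +
      2 * (v z * grushinGrad s u z * grushinGrad s φ z)) + (u z * φ z * grushinLap s v z -
      v z * grushinLap s (fun z => u z * φ z) z)) := by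
    have h := integral_add (i3.add (i4.const_mul 2)) i5
    rw [hg, add_zero] at h
    exact h.symm
  rw [hR]
  refine integral_mono (i1.sub i2) ((i3.add (i4.const_mul 2)).add i5) fun z => ?_
  have hvz := hv0 z
  have huz := hu0 z
  have e1 : v z ^ (p + 1) = v z * (-grushinLap s u z) := by
    rw [eu, Real.rpow_add_one hvz.ne', mul_comm]
  have e2 : u z ^ (θ + 1) = u z * (-grushinLap s v z) := by
    rw [ev, Real.rpow_add_one huz.ne', mul_comm]
  have h1 : u z * v z * grushinLap s φ z ≤ u z * v z * |grushinLap s φ z| :=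
    mul_le_mul_of_nonneg_left (le_abs_self _) (by positivity)
  have h2 : v z * gip s u φ z ≤ v z * (grushinGrad s u z * grushinGrad s φ z) :=
    mul_le_mul_of_nonneg_left (gip_le s hu hφ z) hvz.le
  simp only [e1, e2, lap_mul s hu hφ z]
  nlinarith [h1, h2]

end
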